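/- For λ = 1/2, any n ≥ 1, any index m ∈ {1,…,n}, and all ψ ∈ A, one has C^{1/2}_2(ψ, ξ_m) = −(1/16)·(E'(E'+1))^{−1}(ξ_m · D²ψ) + (1/8)·(E'+1)^{−1}(∂(Dψ)/∂u_m); here E'(E'+1) and E'+1 are invertible on A since they act on A^k by the nonzero scalars (k + n/2)(k + n/2 + 1) and k + n/2 + 1, respectively. -/

import Mathlib

open MvPolynomial

/-- The polynomial symbol algebra `A = ℂ[u₁,…,uₙ,ξ₁,…,ξₙ]`: variables `Sum.inl i` are the
`uᵢ` and variables `Sum.inr i` are the `ξᵢ`. -/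
abbrev PolA (n : ℕ) := MvPolynomial (Fin n ⊕ Fin n) ℂ

namespace LO

/-- ξ-degree of a monomial exponent. -/
def xiDeg {n : ℕ} (d : (Fin n ⊕ Fin n) →₀ ℕ) : ℕ :=
  ∑ i : Fin n, d (Sum.inr i)

/-- `c(E)`: the operator multiplying the ξ-degree-`m` component by `c m`. -/
noncomputable def cE {n : ℕ} (c : ℕ → ℂ) (φ : PolA n) : PolA n :=
  ∑ d ∈ φ.support, monomial d (c (xiDeg d) * coeff d φ)

/-- `D = Σᵢ ∂²/∂uᵢ∂ξᵢ`. -/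
noncomputable def Dop {n : ℕ} (φ : PolA n) : PolA n :=
  ∑ i : Fin n, pderiv (Sum.inl i) (pderiv (Sum.inr i) φ)

/-- The scalar `h^λ_d(m)`. -/
noncomputable def hScal (n : ℕ) (lam : ℂ) (d m : ℕ) : ℂ :=
  (d.factorial : ℂ)⁻¹ *
    ∏ j ∈ Finset.range d,
      ((m : ℂ) + (j : ℂ) + lam * ((n : ℂ) + 1)) /
        (2 * (m : ℂ) + (j : ℂ) + (n : ℂ) + (d : ℂ))

/-- The scalar `g^λ_d(m)`. -/
noncomputable def gScal (n : ℕ) (lam : ℂ) (d m : ℕ) : ℂ :=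
  (d.factorial : ℂ)⁻¹ *
    ∏ j ∈ Finset.range d,
      (-(m : ℂ) - (j : ℂ) - lam * ((n : ℂ) + 1)) /
        (2 * (m : ℂ) + (j : ℂ) + (n : ℂ) + 1)

/-- `bh^λ_d = h^λ_d(E) ∘ D^d` (equal to the identity for `d = 0`). -/
noncomputable def bh {n : ℕ} (lam : ℂ) (d : ℕ) (φ : PolA n) : PolA n :=
  cE (hScal n lam d) (Dop^[d] φ)

/-- `bg^λ_d = g^λ_d(E) ∘ D^d` (equal to the identity for `d = 0`). -/
noncomputable def bg {n : ℕ} (lam : ℂ) (d : ℕ) (φ : PolA n) : PolA n :=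
  cE (gScal n lam d) (Dop^[d] φ)

/-- `N_k(φ,ψ) = (1/k!) Σ_{α ∈ {1,…,n}^k} ∂^kφ/∂ξ_α · ∂^kψ/∂u_α`. -/
noncomputable def Nop {n : ℕ} (k : ℕ) (φ ψ : PolA n) : PolA n :=
  (k.factorial : ℂ)⁻¹ •
    ∑ α : Fin k → Fin n,
      ((List.ofFn α).foldr (fun i acc => pderiv (Sum.inr i) acc) φ) *
      ((List.ofFn α).foldr (fun i acc => pderiv (Sum.inl i) acc) ψ)

/-- The coefficient `C^λ_p` of the Lecomte–Ovsienko star product. -/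
noncomputable def C (n : ℕ) (lam : ℂ) (p : ℕ) (φ ψ : PolA n) : PolA n :=
  ∑ i ∈ Finset.range (p + 1), ∑ j ∈ Finset.range (p + 1),
    ∑ k ∈ Finset.range (p + 1), ∑ m ∈ Finset.range (p + 1),
      if i + j + k + m = p then bg lam m (Nop k (bh lam i φ) (bh lam j ψ)) else 0

/-- The Poisson bracket `{φ,ψ}`. -/
noncomputable def pb {n : ℕ} (φ ψ : PolA n) : PolA n :=
  ∑ i : Fin n,
    (pderiv (Sum.inr i) φ * pderiv (Sum.inl i) ψ
      - pderiv (Sum.inl i) φ * pderiv (Sum.inr i) ψ)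

/-- `φ ∈ A^m` (ξ-homogeneous of degree `m`; for `m < 0` this forces `φ = 0`). -/
def IsXiHomog {n : ℕ} (m : ℤ) (φ : PolA n) : Prop :=
  ∀ d ∈ φ.support, (xiDeg d : ℤ) = m

/-- The set of spanning momentum functions of the projective `sl_{n+1}(ℝ)`-action. -/
noncomputable def momSet (n : ℕ) : Set (PolA n) :=
  (Set.range fun i : Fin n => (X (Sum.inr i) : PolA n)) ∪
  (Set.range fun ij : Fin n × Fin n =>
    (X (Sum.inl ij.1) * X (Sum.inr ij.2) : PolA n)) ∪
  (Set.range fun i : Fin n =>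
    (X (Sum.inl i) * ∑ k : Fin n, X (Sum.inl k) * X (Sum.inr k) : PolA n))

/-- The span `M` of the momentum functions. -/
noncomputable def momSpan (n : ℕ) : Submodule ℂ (PolA n) := Submodule.span ℂ (momSet n)

/-- The Weyl algebra `W` of differential operators with polynomial coefficients,
as a subalgebra of `End_ℂ(A)`. -/
noncomputable def Weyl (n : ℕ) : Subalgebra ℂ (Module.End ℂ (PolA n)) :=
  Algebra.adjoin ℂ
    ((Set.range fun i : Fin n =>
        (LinearMap.mulLeft ℂ (X (Sum.inl i)) : Module.End ℂ (PolA n))) ∪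
     (Set.range fun i : Fin n =>
        (LinearMap.mulLeft ℂ (X (Sum.inr i)) : Module.End ℂ (PolA n))) ∪
     (Set.range fun v : Fin n ⊕ Fin n =>
        ((pderiv v).toLinearMap : Module.End ℂ (PolA n))))

/-- A bilinear map `B : A × A → A` is bidifferential if it is a finite sum
`B(φ,ψ) = Σ_α A_α(φ)·B_α(ψ)` with `A_α, B_α` in the Weyl algebra. -/
def Bidiff (n : ℕ) (B : PolA n → PolA n → PolA n) : Prop :=
  ∃ (N : ℕ) (Aop Bop : Fin N → Weyl n),
    ∀ φ ψ : PolA n,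
      B φ ψ = ∑ α : Fin N,
        (Aop α : Module.End ℂ (PolA n)) φ * (Bop α : Module.End ℂ (PolA n)) ψ

/-- The scalar by which `T_p = ∏_{i=1}^{⌊p/2⌋}(E'+i)` acts on `A^m`. -/
noncomputable def TScal (n p m : ℕ) : ℂ :=
  ∏ i ∈ Finset.Icc 1 (p / 2), ((m : ℂ) + (n : ℂ) / 2 + (i : ℂ))

/-- The scalar by which `S_p = ∏_{i=1}^{⌊p/2⌋}(E'−i)` acts on `A^m`. -/
noncomputable def SScal (n p m : ℕ) : ℂ :=
  ∏ i ∈ Finset.Icc 1 (p / 2), ((m : ℂ) + (n : ℂ) / 2 - (i : ℂ))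

/-- The operator `T_p`. -/
noncomputable def Tp (n p : ℕ) : PolA n → PolA n := cE (TScal n p)

/-- The operator `S_p`. -/
noncomputable def Sp (n p : ℕ) : PolA n → PolA n := cE (SScal n p)

/-- The fiberwise Euler operator `E = Σ ξᵢ ∂/∂ξᵢ` as an endomorphism. -/
noncomputable def Elin (n : ℕ) : Module.End ℂ (PolA n) :=
  ∑ i : Fin n,
    (LinearMap.mulLeft ℂ (X (Sum.inr i)) : Module.End ℂ (PolA n)) ∘ₗ
      (pderiv (Sum.inr i)).toLinearMap

/-- `E' = E + n/2` as an endomorphism. -/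
noncomputable def E'lin (n : ℕ) : Module.End ℂ (PolA n) :=
  Elin n + ((n : ℂ) / 2) • 1

/-- `D` as an endomorphism. -/
noncomputable def Dlin (n : ℕ) : Module.End ℂ (PolA n) :=
  ∑ i : Fin n,
    ((pderiv (Sum.inl i)).toLinearMap : Module.End ℂ (PolA n)) ∘ₗ
      (pderiv (Sum.inr i)).toLinearMap

/-- `L^{(m)} = −(1/16)(ξ_m∘D − 2E'∘∂/∂u_m)∘D`. -/
noncomputable def Lop (n : ℕ) (m : Fin n) : Module.End ℂ (PolA n) :=
  (-(1 / 16 : ℂ)) •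
    (((LinearMap.mulLeft ℂ (X (Sum.inr m)) : Module.End ℂ (PolA n)) ∘ₗ Dlin n
        - (2 : ℂ) • (E'lin n ∘ₗ (pderiv (Sum.inl m)).toLinearMap)) ∘ₗ Dlin n)

end LO


namespace LO

lemma coeff_cE {n : ℕ} (c : ℕ → ℂ) (φ : PolA n) (d) :
    coeff d (cE c φ) = c (xiDeg d) * coeff d φ := by
  classical
  unfold cE
  rw [coeff_sum]
  simp only [coeff_monomial]
  rw [Finset.sum_ite_eq' φ.support d]
  split_ifs with h
  · rfl
  · rw [notMem_support_iff.1 h, mul_zero]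

lemma cE_add {n : ℕ} (c : ℕ → ℂ) (φ χ : PolA n) : cE c (φ + χ) = cE c φ + cE c χ := by
  ext d; simp only [coeff_cE, coeff_add]; ring

lemma cE_sum {n : ℕ} {ι : Type*} (c : ℕ → ℂ) (s : Finset ι) (f : ι → PolA n) :
    cE c (∑ i ∈ s, f i) = ∑ i ∈ s, cE c (f i) := by
  ext d; simp only [coeff_cE, coeff_sum, Finset.mul_sum]

lemma cE_zero {n : ℕ} (c : ℕ → ℂ) : cE c (0 : PolA n) = 0 := by
  ext d; simp [coeff_cE]

lemma cE_cE {n : ℕ} (c e : ℕ → ℂ) (φ : PolA n) :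
    cE c (cE e φ) = cE (fun k => c k * e k) φ := by
  ext d; simp only [coeff_cE]; ring

lemma cE_one {n : ℕ} (c : ℕ → ℂ) (hc : ∀ k, c k = 1) (φ : PolA n) : cE c φ = φ := by
  ext d; simp [coeff_cE, hc]

lemma xiDeg_add {n : ℕ} (d e : (Fin n ⊕ Fin n) →₀ ℕ) : xiDeg (d + e) = xiDeg d + xiDeg e := by
  simp [xiDeg, Finset.sum_add_distrib]

lemma xiDeg_inr {n : ℕ} (i : Fin n) : xiDeg (Finsupp.single (Sum.inr i : Fin n ⊕ Fin n) 1) = 1 := by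
  classical
  simp [xiDeg, Finsupp.single_apply]

lemma xiDeg_inl {n : ℕ} (i : Fin n) : xiDeg (Finsupp.single (Sum.inl i : Fin n ⊕ Fin n) 1) = 0 := by
  simp [xiDeg]

lemma cE_monomial {n : ℕ} (c : ℕ → ℂ) (d) (a : ℂ) :
    cE c (monomial d a : PolA n) = monomial d (c (xiDeg d) * a) := by
  classical
  ext e; simp only [coeff_cE, coeff_monomial]
  split_ifs with h
  · rw [h]
  · simp

lemma cE_X_mul {n : ℕ} (c : ℕ → ℂ) (m : Fin n) (φ : PolA n) :
    X (Sum.inr m) * cE (fun k => c (k + 1)) φ = cE c (X (Sum.inr m) * φ) := by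
  classical
  ext d
  rw [coeff_cE, coeff_X_mul', coeff_X_mul']
  split_ifs with h
  · rw [coeff_cE]
    have : d = (d - Finsupp.single (Sum.inr m) 1) + Finsupp.single (Sum.inr m) 1 := by
      rw [tsub_add_cancel_of_le]
      rw [Finsupp.single_le_iff]
      exact Nat.one_le_iff_ne_zero.2 (Finsupp.mem_support_iff.1 h)
    conv_rhs => rw [this, xiDeg_add, xiDeg_inr, ← this]
  · simp

lemma pderiv_inl_cE {n : ℕ} (c : ℕ → ℂ) (m : Fin n) (φ : PolA n) :
    pderiv (Sum.inl m) (cE c φ) = cE c (pderiv (Sum.inl m) φ) := by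
  ext d
  simp only [coeff_cE, coeff_pderiv, xiDeg_add, xiDeg_inl, add_zero]
  ring

lemma pderiv_inr_cE {n : ℕ} (c : ℕ → ℂ) (m : Fin n) (φ : PolA n) :
    pderiv (Sum.inr m) (cE c φ) = cE (fun k => c (k + 1)) (pderiv (Sum.inr m) φ) := by
  ext d
  simp only [coeff_cE, coeff_pderiv, xiDeg_add, xiDeg_inr]
  ring

lemma pderiv_swap {n : ℕ} (i j : Fin n ⊕ Fin n) (φ : PolA n) :
    pderiv i (pderiv j φ) = pderiv j (pderiv i φ) := by
  classical
  ext d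
  simp only [coeff_pderiv]
  rw [add_right_comm]
  by_cases h : i = j
  · subst h; rfl
  · simp [Finsupp.single_apply, h, Ne.symm h]
    ring

lemma Dop_cE {n : ℕ} (c : ℕ → ℂ) (φ : PolA n) :
    Dop (cE c φ) = cE (fun k => c (k + 1)) (Dop φ) := by
  simp only [Dop, cE_sum, pderiv_inr_cE, pderiv_inl_cE]

lemma Dop_add {n : ℕ} (φ χ : PolA n) : Dop (φ + χ) = Dop φ + Dop χ := by
  simp only [Dop, map_add, Finset.sum_add_distrib]

lemma Dop_zero {n : ℕ} : Dop (0 : PolA n) = 0 := by simp [Dop]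

lemma Dop_X {n : ℕ} (m : Fin n) : Dop (X (Sum.inr m) : PolA n) = 0 := by
  classical
  simp only [Dop, pderiv_X]
  refine Finset.sum_eq_zero fun i _ => ?_
  by_cases h : i = m
  · subst h; simp
  · simp [Pi.single_apply, Ne.symm h]

lemma Dop_mul {n : ℕ} (m : Fin n) (φ : PolA n) :
    Dop (φ * X (Sum.inr m)) = X (Sum.inr m) * Dop φ + pderiv (Sum.inl m) φ := by
  classical
  have : ∀ i : Fin n, pderiv (Sum.inl i) (pderiv (Sum.inr i) (φ * X (Sum.inr m))) =
      X (Sum.inr m) * pderiv (Sum.inl i) (pderiv (Sum.inr i) φ) +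
        if i = m then pderiv (Sum.inl m) φ else 0 := by
    intro i
    by_cases h : i = m
    · subst h
      simp [pderiv_X, mul_comm, add_comm]
    · simp [pderiv_mul, pderiv_X, Pi.single_apply, h, Ne.symm h, mul_comm]
  simp only [Dop, this, Finset.sum_add_distrib, ← Finset.mul_sum]
  simp

lemma Dop_pderiv {n : ℕ} (m : Fin n) (φ : PolA n) :
    Dop (pderiv (Sum.inl m) φ) = pderiv (Sum.inl m) (Dop φ) := by
  simp only [Dop, map_sum]
  refine Finset.sum_congr rfl fun i _ => ?_
  rw [pderiv_swap (Sum.inr i) (Sum.inl m), pderiv_swap (Sum.inl i) (Sum.inl m)]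

lemma bh_zero {n : ℕ} (lam : ℂ) (φ : PolA n) : bh lam 0 φ = φ :=
  cE_one _ (by simp [hScal]) _

lemma bg_zero {n : ℕ} (lam : ℂ) (φ : PolA n) : bg lam 0 φ = φ :=
  cE_one _ (by simp [gScal]) _

lemma Nop_zero {n : ℕ} (φ ψ : PolA n) : Nop 0 φ ψ = φ * ψ := by
  simp [Nop]

lemma Nop_zero_right {n : ℕ} (k : ℕ) (φ : PolA n) : Nop k φ 0 = 0 := by
  have : ∀ l : List (Fin n), l.foldr (fun i acc => pderiv (Sum.inl i) acc) (0 : PolA n) = 0 := by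
    intro l; induction l with
    | nil => rfl
    | cons a l ih => simp [ih]
  simp [Nop, this]

lemma Nop_succ_X {n : ℕ} (k : ℕ) (φ : PolA n) (m : Fin n) :
    Nop (k + 1) φ (X (Sum.inr m)) = 0 := by
  have : ∀ (l : List (Fin n)) (a : Fin n),
      (a :: l).foldr (fun i acc => pderiv (Sum.inl i) acc) (X (Sum.inr m) : PolA n) = 0 := by
    intro l; induction l with
    | nil => intro a; simp [pderiv_X]
    | cons b l ih => intro a; rw [List.foldr_cons, ih b, map_zero]
  simp only [Nop, List.ofFn_succ, this]
  simp

lemma bh_X {n : ℕ} (lam : ℂ) (j : ℕ) (m : Fin n) :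
    bh lam (j + 1) (X (Sum.inr m) : PolA n) = 0 := by
  have h0 : ∀ j, Dop^[j] (0 : PolA n) = 0 := by
    intro j; induction j with
    | zero => rfl
    | succ j ih => rw [Function.iterate_succ_apply, Dop_zero, ih]
  rw [bh, Function.iterate_succ_apply, Dop_X, h0, cE_zero]

lemma bg_zero_right {n : ℕ} (lam : ℂ) (j : ℕ) : bg lam j (0 : PolA n) = 0 := by
  have h0 : ∀ j, Dop^[j] (0 : PolA n) = 0 := by
    intro j; induction j with
    | zero => rfl
    | succ j ih => rw [Function.iterate_succ_apply, Dop_zero, ih]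
  rw [bg, h0, cE_zero]

lemma C_two {n : ℕ} (lam : ℂ) (ψ : PolA n) (m : Fin n) :
    C n lam 2 ψ (X (Sum.inr m)) = bh lam 2 ψ * X (Sum.inr m)
      + bg lam 1 (bh lam 1 ψ * X (Sum.inr m)) + bg lam 2 (ψ * X (Sum.inr m)) := by
  have h1 := bh_X lam 0 m
  have h2 := bh_X lam 1 m
  have n1 := fun φ : PolA n => Nop_succ_X 0 φ m
  have n2 := fun φ : PolA n => Nop_succ_X 1 φ m
  norm_num at h1 h2 n1 n2
  simp [C, Finset.sum_range_succ, h1, h2, n1, n2, bh_zero, bg_zero, Nop_zero, Nop_zero_right,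
    bg_zero_right]
  ring

lemma hScal_one (n k : ℕ) : hScal n (1/2) 1 k = 1 / 2 := by
  have a1 : (2 * (k:ℂ) + n + 1) ≠ 0 := by exact_mod_cast (by omega : 2 * k + n + 1 ≠ 0)
  simp only [hScal, Finset.prod_range_one, Nat.factorial_one, Nat.cast_one, Nat.cast_zero,
    inv_one, one_mul, add_zero]
  rw [div_eq_iff a1]; ring

lemma gScal_one (n k : ℕ) : gScal n (1/2) 1 k = -1 / 2 := by
  have a1 : (2 * (k:ℂ) + n + 1) ≠ 0 := by exact_mod_cast (by omega : 2 * k + n + 1 ≠ 0)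
  simp only [gScal, Finset.prod_range_one, Nat.factorial_one, Nat.cast_one, Nat.cast_zero,
    inv_one, one_mul, add_zero]
  rw [div_eq_iff a1]; ring

lemma hScal_two (n k : ℕ) :
    hScal n (1/2) 2 k = (2 * (k:ℂ) + n + 1) / (8 * (2 * (k:ℂ) + n + 2)) := by
  have a2 : (2 * (k:ℂ) + n + 2) ≠ 0 := by exact_mod_cast (by omega : 2 * k + n + 2 ≠ 0)
  have a3 : (2 * (k:ℂ) + n + 3) ≠ 0 := by exact_mod_cast (by omega : 2 * k + n + 3 ≠ 0)
  simp only [hScal, Finset.prod_range_succ, Finset.prod_range_zero, Nat.factorial_two,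
    Nat.cast_one, Nat.cast_zero, Nat.cast_ofNat, one_mul, add_zero]
  rw [show 2 * (k:ℂ) + 1 + n + 2 = 2 * k + n + 3 by ring]
  field_simp
  ring

lemma gScal_two (n k : ℕ) :
    gScal n (1/2) 2 k = (2 * (k:ℂ) + n + 3) / (8 * (2 * (k:ℂ) + n + 2)) := by
  have a1 : (2 * (k:ℂ) + n + 1) ≠ 0 := by exact_mod_cast (by omega : 2 * k + n + 1 ≠ 0)
  have a2 : (2 * (k:ℂ) + n + 2) ≠ 0 := by exact_mod_cast (by omega : 2 * k + n + 2 ≠ 0)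
  simp only [gScal, Finset.prod_range_succ, Finset.prod_range_zero, Nat.factorial_two,
    Nat.cast_one, Nat.cast_zero, Nat.cast_ofNat, one_mul, add_zero]
  rw [show 2 * (k:ℂ) + 1 + n + 1 = 2 * k + n + 2 by ring]
  field_simp
  ring

end LO

open LO in
theorem stmt_14 (n : ℕ) (hn : 1 ≤ n) (m : Fin n) (ψ : PolA n) :
    LO.C n (1 / 2) 2 ψ (X (Sum.inr m)) =
      (-(1 / 16 : ℂ)) •
          LO.cE (fun k => (((k : ℂ) + (n : ℂ) / 2) * ((k : ℂ) + (n : ℂ) / 2 + 1))⁻¹)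
            (X (Sum.inr m) * LO.Dop (LO.Dop ψ)) +
      (1 / 8 : ℂ) •
          LO.cE (fun k => ((k : ℂ) + (n : ℂ) / 2 + 1)⁻¹)
            (pderiv (Sum.inl m) (LO.Dop ψ)) := by
  rw [C_two]
  have e1 : bh (1/2) 2 ψ * X (Sum.inr m) =
      X (Sum.inr m) * cE (hScal n (1/2) 2) (Dop (Dop ψ)) := by
    rw [mul_comm]; rfl
  have e2 : bg (1/2) 1 (bh (1/2) 1 ψ * X (Sum.inr m)) =
      X (Sum.inr m) * cE (fun k => gScal n (1/2) 1 (k+1) * hScal n (1/2) 1 (k+1)) (Dop (Dop ψ))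
      + cE (fun k => gScal n (1/2) 1 k * hScal n (1/2) 1 k) (pderiv (Sum.inl m) (Dop ψ)) := by
    simp only [bg, bh, Function.iterate_one]
    rw [Dop_mul, Dop_cE, pderiv_inl_cE, cE_add, cE_cE, ← cE_X_mul, cE_cE]
  have e3 : bg (1/2) 2 (ψ * X (Sum.inr m)) =
      X (Sum.inr m) * cE (fun k => gScal n (1/2) 2 (k+1)) (Dop (Dop ψ))
      + cE (gScal n (1/2) 2) (pderiv (Sum.inl m) (Dop ψ))
      + cE (gScal n (1/2) 2) (pderiv (Sum.inl m) (Dop ψ)) := by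
    have : bg (1/2) 2 (ψ * X (Sum.inr m)) = cE (gScal n (1/2) 2) (Dop (Dop (ψ * X (Sum.inr m)))) :=
      rfl
    rw [this, Dop_mul, Dop_add, mul_comm, Dop_mul, Dop_pderiv, cE_add, cE_add, ← cE_X_mul]
  rw [e1, e2, e3, ← cE_X_mul]
  have key1 : X (Sum.inr m) * cE (hScal n (1/2) 2) (Dop (Dop ψ))
      + X (Sum.inr m) * cE (fun k => gScal n (1/2) 1 (k+1) * hScal n (1/2) 1 (k+1)) (Dop (Dop ψ))
      + X (Sum.inr m) * cE (fun k => gScal n (1/2) 2 (k+1)) (Dop (Dop ψ))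
      = (-(1 / 16 : ℂ)) • (X (Sum.inr m) * cE (fun k => ((((k+1 : ℕ) : ℂ) + (n : ℂ) / 2) *
          (((k+1 : ℕ) : ℂ) + (n : ℂ) / 2 + 1))⁻¹) (Dop (Dop ψ))) := by
    rw [← mul_add, ← mul_add, ← mul_smul_comm]
    congr 1
    ext d
    simp only [coeff_add, coeff_smul, coeff_cE, smul_eq_mul]
    rw [← add_mul, ← add_mul, ← mul_assoc]
    congr 1
    generalize xiDeg d = k
    rw [hScal_one, gScal_one, hScal_two, gScal_two]
    have a2 : (2 * (k:ℂ) + n + 2) ≠ 0 := by exact_mod_cast (by omega : 2 * k + n + 2 ≠ 0)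
    have a4 : (2 * (k:ℂ) + n + 4) ≠ 0 := by exact_mod_cast (by omega : 2 * k + n + 4 ≠ 0)
    push_cast
    rw [show (k:ℂ) + 1 + n / 2 + 1 = (2 * k + n + 4) / 2 by ring,
      show (k:ℂ) + 1 + n / 2 = (2 * k + n + 2) / 2 by ring,
      show 2 * ((k:ℂ) + 1) + n + 2 = 2 * k + n + 4 by ring]
    field_simp
    ring
  have key2 : cE (fun k => gScal n (1/2) 1 k * hScal n (1/2) 1 k) (pderiv (Sum.inl m) (Dop ψ))
      + cE (gScal n (1/2) 2) (pderiv (Sum.inl m) (Dop ψ))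
      + cE (gScal n (1/2) 2) (pderiv (Sum.inl m) (Dop ψ))
      = (1 / 8 : ℂ) • cE (fun k => ((k : ℂ) + (n : ℂ) / 2 + 1)⁻¹)
            (pderiv (Sum.inl m) (Dop ψ)) := by
    ext d
    simp only [coeff_add, coeff_smul, coeff_cE, smul_eq_mul]
    rw [← add_mul, ← add_mul, ← mul_assoc]
    congr 1
    generalize xiDeg d = k
    rw [hScal_one, gScal_one, gScal_two]
    have a2 : (2 * (k:ℂ) + n + 2) ≠ 0 := by exact_mod_cast (by omega : 2 * k + n + 2 ≠ 0)
    rw [show (k:ℂ) + n / 2 + 1 = (2 * k + n + 2) / 2 by ring]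
    field_simp
    ring
  rw [← key1, ← key2]
  ring
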